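/- Let t ≥ 4 be an integer and let G be a connected C_{≥t}-free graph on n ≥ 16 vertices such that |N[v]| ≤ (1/(4(t−1))) · √n for every vertex v of G. Then there exists a set X ⊆ V(G) such that every connected component C of G − X satisfanswer|V(C)| ≤ n − √n, and moreover |X| ≤ n^{−1/2} · (n − |V(C)|) for every connected component C of G − X. -/

import Mathlib

noncomputable section

namespace Paper

/-- The closed neighborhood `N[X]` of a set `X` of vertices. -/
def closedNbhd {V : Type} (G : SimpleGraph V) (X : Set V) : Set V :=
  {v | v ∈ X ∨ ∃ x ∈ X, G.Adj x v}

/-- `p : Fin k → V` is an induced cycle in `G` (on `k` vertices). -/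
def IsInducedCycle {V : Type} (G : SimpleGraph V) {k : ℕ} (p : Fin k → V) : Prop :=
  Function.Injective p ∧
    ∀ i j : Fin k, G.Adj (p i) (p j) ↔
      (((i : ℕ) + 1) % k = (j : ℕ) ∨ ((j : ℕ) + 1) % k = (i : ℕ))

/-- `G` is `C_{≥t}`-free: it contains no induced cycle on at least `t` vertices. -/
def CgeFree {V : Type} (G : SimpleGraph V) (t : ℕ) : Prop :=
  ∀ k, t ≤ k → ∀ p : Fin k → V, ¬ IsInducedCycle G p

/-- `C` is a connected component of `G - X`. -/
def IsCompOfDel {V : Type} (G : SimpleGraph V) (X : Set V) (C : Set V) : Prop :=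
  ∃ v : ↥(Xᶜ), C = Subtype.val '' {u : ↥(Xᶜ) | (G.induce Xᶜ).Reachable u v}

/-!
Gyárfás' path argument. If no `N[A]` with `|A| ≤ t - 2` splits `G` into components of at most
`n / 2` vertices, then each such `G - N[A]` has a unique majority component. An induced path grows
greedily: the next vertex is taken on the boundary of the majority component left by the vertices
chosen so far, so it sees only the last of them, and the majority component strictly shrinks. Once
the path has `t - 2` vertices besides its last one, its first vertex can be dropped without
changing the majority component `C`: a boundary vertex of `C` seen only by the first vertex would
be joined through `C` to the end of the path, closing an induced cycle of length at least `t`. So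
the component would shrink forever. Hence some `N[A]` with `|A| ≤ t - 2` is a balanced separator,
and the degree bound makes it small.
-/

section

variable {V : Type*} {G : SimpleGraph V}

theorem exists_adj_of_preconnected_induce {C S : Set V} (hC : (G.induce C).Preconnected)
    (hinter : (C ∩ S).Nonempty) (hdiff : (C \ S).Nonempty) :
    ∃ x ∈ C ∩ S, ∃ y ∈ C \ S, G.Adj x y := by
  obtain ⟨x, hxC, hxS⟩ := hinter
  obtain ⟨y, hyC, hyS⟩ := hdiff
  obtain ⟨p⟩ := hC ⟨x, hxC⟩ ⟨y, hyC⟩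
  obtain ⟨d, -, hfst, hsnd⟩ := p.exists_boundary_dart (Subtype.val ⁻¹' S) hxS hyS
  exact ⟨d.fst, ⟨d.fst.2, hfst⟩, d.snd, ⟨d.snd.2, hsnd⟩, d.adj⟩

theorem connected_induce_insert {C : Set V} {w : V} (hC : (G.induce C).Preconnected)
    (hw : ∃ x ∈ C, G.Adj x w) : (G.induce (insert w C)).Connected := by
  obtain ⟨x, hx, hxw⟩ := hw
  rw [Set.insert_eq]
  exact SimpleGraph.connected_induce_union .of_subsingleton hC rfl hx hxw.symm

/-- `a` lists, in order, the vertices of an induced path of `G` on `k` vertices. The adjacency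
condition has the shape of the one in `IsInducedCycle`, without the wrap-around. -/
def IsInducedPath (G : SimpleGraph V) {k : ℕ} (a : Fin k → V) : Prop :=
  Function.Injective a ∧
    ∀ i j : Fin k, G.Adj (a i) (a j) ↔ ((i : ℕ) + 1 = j ∨ (j : ℕ) + 1 = i)

namespace IsInducedPath

variable {k : ℕ}

theorem comp_castSucc {a : Fin (k + 1) → V} (ha : IsInducedPath G a) :
    IsInducedPath G (a ∘ Fin.castSucc) :=
  ⟨ha.1.comp (Fin.castSucc_injective k), fun i j ↦ ha.2 i.castSucc j.castSucc⟩

theorem comp_succ {a : Fin (k + 1) → V} (ha : IsInducedPath G a) :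
    IsInducedPath G (a ∘ Fin.succ) :=
  ⟨ha.1.comp (Fin.succ_injective k), fun i j ↦ by
    simp only [Function.comp_apply, ha.2, Fin.val_succ]
    omega⟩

theorem snoc {a : Fin (k + 1) → V} {v : V} (ha : IsInducedPath G a) (hv : v ∉ Set.range a)
    (hadj : ∀ i, G.Adj (a i) v ↔ i = Fin.last k) :
    IsInducedPath G (Fin.snoc a v : Fin (k + 2) → V) := by
  simp only [Fin.ext_iff, Fin.val_last] at hadj
  refine ⟨Fin.snoc_injective_iff.2 ⟨ha.1, hv⟩, fun i j ↦ ?_⟩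
  induction i using Fin.lastCases <;> induction j using Fin.lastCases <;>
    simp [ha.2, hadj, G.adj_comm v] <;> omega

theorem map {W : Type*} {H : SimpleGraph W} {a : Fin k → W} (ha : IsInducedPath H a)
    (f : H ↪g G) : IsInducedPath G (f ∘ a) :=
  ⟨f.injective.comp ha.1, fun i j ↦ f.map_adj_iff.trans (ha.2 i j)⟩

end IsInducedPath

theorem dist_getVert_of_length_eq_dist {u v : V} {p : G.Walk u v} (hp : p.length = G.dist u v)
    {i : ℕ} (hi : i ≤ p.length) : G.dist u (p.getVert i) = i := by
  have htake : G.dist u (p.getVert i) ≤ i := (SimpleGraph.dist_le (p.take i)).trans (by simp)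
  have hdrop : G.dist (p.getVert i) v ≤ p.length - i :=
    (SimpleGraph.dist_le (p.drop i)).trans (by simp)
  have htriangle : G.dist u v ≤ G.dist u (p.getVert i) + G.dist (p.getVert i) v :=
    (p.take i).reachable.dist_triangle_left v
  omega

theorem isInducedPath_getVert_of_length_eq_dist {u v : V} {p : G.Walk u v}
    (hp : p.length = G.dist u v) :
    IsInducedPath G (fun i : Fin (p.length + 1) ↦ p.getVert i) := by
  have hdist (i : Fin (p.length + 1)) : G.dist u (p.getVert i) = i :=
    dist_getVert_of_length_eq_dist hp (Nat.lt_succ_iff.1 i.2)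
  have hinj : Function.Injective (fun i : Fin (p.length + 1) ↦ p.getVert i) := fun i j hij ↦ by
    rw [Fin.ext_iff, ← hdist i, ← hdist j]
    exact congrArg (G.dist u) hij
  refine ⟨hinj, fun i j ↦ ⟨fun hadj ↦ ?_, ?_⟩⟩
  · have hne : i ≠ j := fun hij ↦ hadj.ne (congrArg (fun i : Fin _ ↦ p.getVert i) hij)
    have := hadj.diff_dist_adj (u := u)
    rw [hdist, hdist] at this
    omega
  · rintro (hij | hij)
    · simpa [← hij] using p.adj_getVert_succ (i := i) (by omega)
    · simpa [← hij] using (p.adj_getVert_succ (i := j) (by omega)).symm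

theorem exists_isInducedPath_of_reachable {u v : V} (h : G.Reachable u v) :
    ∃ (m : ℕ) (a : Fin (m + 1) → V), IsInducedPath G a ∧ a 0 = u ∧ a (Fin.last m) = v := by
  obtain ⟨p, hp⟩ := h.exists_walk_length_eq_dist
  exact ⟨p.length, _, isInducedPath_getVert_of_length_eq_dist hp, by simp, by simp⟩

theorem exists_isInducedPath_through {C : Set V} {w u : V} (hC : (G.induce C).Preconnected)
    (hw : ∃ x ∈ C, G.Adj x w) (hu : ∃ x ∈ C, G.Adj x u) (hwu : w ≠ u) :
    ∃ (m : ℕ) (b : Fin (m + 2) → V), IsInducedPath G b ∧ b 0 = w ∧ b (Fin.last (m + 1)) = u ∧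
      ∀ j, j ≠ 0 → j ≠ Fin.last (m + 1) → b j ∈ C := by
  have hCu := connected_induce_insert hC hu
  have hCuw := connected_induce_insert (w := w) hCu.preconnected
    (hw.imp fun _ ↦ And.imp_left (Set.mem_insert_of_mem u))
  obtain ⟨m, b, hb, hb0, hbm⟩ :=
    exists_isInducedPath_of_reachable (hCuw.preconnected ⟨w, by simp⟩ ⟨u, by simp⟩)
  obtain _ | m := m
  · exact absurd (congrArg Subtype.val (hb0.symm.trans hbm)) hwu
  refine ⟨m, _, hb.map (SimpleGraph.Embedding.induce _), congrArg Subtype.val hb0,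
    congrArg Subtype.val hbm, fun j hj0 hjm ↦ ?_⟩
  obtain hjw | hju | hjC := (b j).2
  · exact absurd (hb.1 (Subtype.ext (hjw.trans (congrArg Subtype.val hb0.symm)))) hj0
  · exact absurd (hb.1 (Subtype.ext (hju.trans (congrArg Subtype.val hbm.symm)))) hjm
  · exact hjC

theorem ncard_range_fin_le {k : ℕ} (a : Fin k → V) : (Set.range a).ncard ≤ k := by
  rw [← Set.image_univ]
  simpa using Set.ncard_image_le (f := a) (s := Set.univ)

end

section

variable {V : Type} {G : SimpleGraph V}

theorem IsInducedPath.isInducedCycle_append {k m : ℕ} {a : Fin (k + 1) → V} {b : Fin (m + 1) → V}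
    (ha : IsInducedPath G a) (hb : IsInducedPath G b) (hne : ∀ i j, a i ≠ b j)
    (hadj : ∀ i j, G.Adj (a i) (b j) ↔ (i = Fin.last k ∧ j = 0) ∨ (i = 0 ∧ j = Fin.last m)) :
    IsInducedCycle G (Fin.append a b) := by
  have succ_mod {i n : ℕ} (hi : i < n) : (i + 1) % n = if i + 1 = n then 0 else i + 1 := by
    split_ifs with h
    · rw [h, Nat.mod_self]
    · exact Nat.mod_eq_of_lt (by omega)
  simp only [Fin.ext_iff, Fin.val_last, Fin.val_zero] at hadj
  refine ⟨Fin.append_injective_iff.2 ⟨ha.1, hb.1, hne⟩, fun i j ↦ ?_⟩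
  rw [succ_mod i.2, succ_mod j.2]
  induction i using Fin.addCases <;> induction j using Fin.addCases <;>
    simp only [Fin.append_left, Fin.append_right, Fin.val_castAdd, Fin.val_natAdd, ha.2, hb.2,
      hadj, G.adj_comm (b _) (a _)] <;>
    split_ifs <;> omega

theorem CgeFree.mono {s t : ℕ} (hst : s ≤ t) (h : CgeFree G s) : CgeFree G t :=
  fun k hk ↦ h k (hst.trans hk)

theorem mem_closedNbhd_range {ι : Type*} {a : ι → V} {v : V} :
    v ∈ closedNbhd G (Set.range a) ↔ ∃ i, v = a i ∨ G.Adj (a i) v := by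
  simp only [closedNbhd, Set.mem_ofPred_eq, Set.mem_range, exists_exists_eq_and,
    eq_comm (a := v), exists_or]

theorem closedNbhd_mono {A B : Set V} (hAB : A ⊆ B) : closedNbhd G A ⊆ closedNbhd G B := by
  rintro v (hv | ⟨x, hx, hxv⟩)
  · exact Or.inl (hAB hv)
  · exact Or.inr ⟨x, hAB hx, hxv⟩

theorem closedNbhd_eq_biUnion (A : Set V) : closedNbhd G A = ⋃ v ∈ A, closedNbhd G {v} := by
  ext v
  simp only [closedNbhd, Set.mem_singleton_iff, Set.mem_iUnion, Set.mem_ofPred_eq,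
    exists_eq_left, exists_prop, and_or_left, exists_or, exists_eq_right']

theorem ncard_closedNbhd_le [Finite V] {A : Set V} {B : ℝ}
    (hB : ∀ v ∈ A, ((closedNbhd G {v}).ncard : ℝ) ≤ B) :
    ((closedNbhd G A).ncard : ℝ) ≤ A.ncard * B := by
  have hA := A.toFinite
  calc ((closedNbhd G A).ncard : ℝ)
      = ((⋃ v ∈ hA.toFinset, closedNbhd G {v}).ncard : ℝ) := by
        simp only [hA.mem_toFinset, ← closedNbhd_eq_biUnion]
    _ ≤ ∑ v ∈ hA.toFinset, ((closedNbhd G {v}).ncard : ℝ) := by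
        exact_mod_cast hA.toFinset.set_ncard_biUnion_le _
    _ ≤ hA.toFinset.card • B := Finset.sum_le_card_nsmul _ _ _ fun v hv ↦
        hB v (hA.mem_toFinset.1 hv)
    _ = A.ncard * B := by rw [nsmul_eq_mul, Set.ncard_eq_toFinset_card A hA]

namespace IsCompOfDel

variable {X C : Set V}

theorem nonempty (h : IsCompOfDel G X C) : C.Nonempty := by
  obtain ⟨v, rfl⟩ := h
  exact ⟨v, v, .rfl, rfl⟩

theorem disjoint (h : IsCompOfDel G X C) : Disjoint C X := by
  obtain ⟨v, rfl⟩ := h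
  rw [Set.disjoint_left]
  rintro _ ⟨x, -, rfl⟩
  exact x.2

theorem preconnected (h : IsCompOfDel G X C) : (G.induce C).Preconnected := by
  obtain ⟨v, rfl⟩ := h
  refine ((G.induce Xᶜ).connectedComponentMk v).connected_toSimpleGraph.preconnected.map
    (SimpleGraph.induceHom (SimpleGraph.Embedding.induce Xᶜ).toHom
      fun u hu ↦ ⟨u, SimpleGraph.ConnectedComponent.exact hu, rfl⟩) ?_
  rintro ⟨_, u, hu, rfl⟩
  exact ⟨⟨u, SimpleGraph.ConnectedComponent.sound hu⟩, rfl⟩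

theorem mem_of_adj (h : IsCompOfDel G X C) {x y : V} (hx : x ∈ C) (hxy : G.Adj x y)
    (hy : y ∉ X) : y ∈ C := by
  obtain ⟨v, rfl⟩ := h
  obtain ⟨x, hxv, rfl⟩ := hx
  have hyx : (G.induce Xᶜ).Adj ⟨y, hy⟩ x := hxy.symm
  exact ⟨⟨y, hy⟩, hyx.reachable.trans hxv, rfl⟩

theorem of_preconnected (hne : C.Nonempty) (hdisj : Disjoint C X)
    (hconn : (G.induce C).Preconnected)
    (hclosed : ∀ x ∈ C, ∀ y, G.Adj x y → y ∉ X → y ∈ C) : IsCompOfDel G X C := by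
  obtain ⟨v, hv⟩ := hne
  have hCX : C ⊆ Xᶜ := hdisj.subset_compl_right
  refine ⟨⟨v, hCX hv⟩, Set.Subset.antisymm (fun u hu ↦ ?_) ?_⟩
  · exact ⟨⟨u, hCX hu⟩, (hconn ⟨u, hu⟩ ⟨v, hv⟩).map (G.induceHomOfLE hCX).toHom, rfl⟩
  · rintro _ ⟨u, hu, rfl⟩
    by_contra huC
    obtain ⟨p⟩ := hu.symm
    obtain ⟨d, -, hfst, hsnd⟩ := p.exists_boundary_dart (Subtype.val ⁻¹' C) hv huC
    exact hsnd (hclosed _ hfst _ d.adj d.snd.2)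

theorem subset_of_inter_nonempty {X' C' : Set V} (h : IsCompOfDel G X C)
    (h' : IsCompOfDel G X' C') (hX : X ⊆ X') (hinter : (C' ∩ C).Nonempty) : C' ⊆ C := by
  by_contra hsub
  obtain ⟨x, hx, y, hy, hxy⟩ :=
    exists_adj_of_preconnected_induce h'.preconnected hinter (Set.sdiff_nonempty.2 hsub)
  exact hy.2 (h.mem_of_adj hx.2 hxy fun hyX ↦ h'.disjoint.notMem_of_mem_left hy.1 (hX hyX))

end IsCompOfDel

theorem IsInducedPath.exists_isInducedCycle_of_detour {k : ℕ} {a : Fin (k + 1) → V} {C : Set V}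
    {w u : V} (ha : IsInducedPath G a) (hC : (G.induce C).Preconnected)
    (hdisj : Disjoint C (closedNbhd G (Set.range a))) (hwu : w ≠ u)
    (hwC : ∃ x ∈ C, G.Adj x w) (huC : ∃ x ∈ C, G.Adj x u)
    (hw_ne : ∀ i, a i ≠ w) (hu_ne : ∀ i, a i ≠ u)
    (hw_adj : ∀ i, G.Adj (a i) w ↔ i = Fin.last k) (hu_adj : ∀ i, G.Adj (a i) u ↔ i = 0) :
    ∃ n, k + 3 ≤ n ∧ ∃ p : Fin n → V, IsInducedCycle G p := by
  obtain ⟨m, b, hb, hb0, hbm, hbC⟩ := exists_isInducedPath_through hC hwC huC hwu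
  have hb_far (i) {j} (hj0 : j ≠ 0) (hjm : j ≠ Fin.last (m + 1)) :
      ¬ (b j = a i ∨ G.Adj (a i) (b j)) := fun hi ↦
    hdisj.notMem_of_mem_left (hbC j hj0 hjm) (mem_closedNbhd_range.2 ⟨i, hi⟩)
  refine ⟨_, by omega, _, ha.isInducedCycle_append hb (fun i j ↦ ?_) (fun i j ↦ ?_)⟩
  · obtain rfl | hj0 := eq_or_ne j 0
    · exact hb0 ▸ hw_ne i
    obtain rfl | hjm := eq_or_ne j (Fin.last (m + 1))
    · exact hbm ▸ hu_ne i
    · exact fun hi ↦ hb_far i hj0 hjm (Or.inl hi.symm)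
  · obtain rfl | hj0 := eq_or_ne j 0
    · simp [hb0, hw_adj]
    obtain rfl | hjm := eq_or_ne j (Fin.last (m + 1))
    · simp [hbm, hu_adj]
    · simpa [hj0, hjm] using fun hi ↦ hb_far i hj0 hjm (Or.inr hi)

/-- `C` is a component of `G - N[A]` containing more than half of all vertices. -/
structure IsMajorityComp (G : SimpleGraph V) (A C : Set V) : Prop where
  isCompOfDel : IsCompOfDel G (closedNbhd G A) C
  card_lt : Nat.card V < 2 * C.ncard

theorem IsMajorityComp.subset [Finite V] {A A' C C' : Set V} (h : IsMajorityComp G A C)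
    (h' : IsMajorityComp G A' C') (hA : A ⊆ A') : C' ⊆ C := by
  refine h.isCompOfDel.subset_of_inter_nonempty h'.isCompOfDel (closedNbhd_mono hA) ?_
  have := h.card_lt
  have := h'.card_lt
  exact Set.nonempty_inter_of_lt_ncard_add_ncard (by omega)

/-- A path as in Gyárfás' argument: it is induced, the closed neighbourhood of all its vertices
but the last leaves a majority component `C`, and the last vertex lies in `C` or has a neighbour
there. (It lies in `C` exactly when it is the only vertex of the path, `k = 0`.) -/
structure IsGyarfasPath (G : SimpleGraph V) {k : ℕ} (a : Fin (k + 1) → V) (C : Set V) : Prop where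
  isInducedPath : IsInducedPath G a
  isMajorityComp : IsMajorityComp G (Set.range (a ∘ Fin.castSucc)) C
  last_mem : a (Fin.last k) ∈ closedNbhd G C

namespace IsGyarfasPath

variable {k : ℕ} {C : Set V}

theorem exists_snoc [Finite V] {a : Fin (k + 1) → V} {C' : Set V} (h : IsGyarfasPath G a C)
    (h' : IsMajorityComp G (Set.range a) C') :
    C' ⊂ C ∧ ∃ y, IsGyarfasPath G (Fin.snoc a y : Fin (k + 2) → V) C' := by
  have hcomp := h.isMajorityComp.isCompOfDel
  have hcomp' := h'.isCompOfDel
  have hsub : C' ⊆ C := h.isMajorityComp.subset h' (Set.range_comp_subset_range _ _)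
  obtain ⟨z, hzC, hz⟩ : ∃ z ∈ C, z ∈ closedNbhd G (Set.range a) := by
    obtain hC | ⟨z, hz, hadj⟩ := h.last_mem
    · exact ⟨_, hC, Or.inl ⟨_, rfl⟩⟩
    · exact ⟨z, hz, Or.inr ⟨_, ⟨_, rfl⟩, hadj.symm⟩⟩
  have hzC' : z ∉ C' := hcomp'.disjoint.notMem_of_mem_right hz
  obtain ⟨x, ⟨-, hx⟩, y, ⟨hyC, hyC'⟩, hxy⟩ := exists_adj_of_preconnected_induce
    hcomp.preconnected (hcomp'.nonempty.imp fun x hx ↦ ⟨hsub hx, hx⟩) ⟨z, hzC, hzC'⟩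
  have hx_far : x ∉ closedNbhd G (Set.range a) := hcomp'.disjoint.notMem_of_mem_left hx
  have hy_far : y ∉ closedNbhd G (Set.range (a ∘ Fin.castSucc)) :=
    hcomp.disjoint.notMem_of_mem_left hyC
  have hy_notMem : y ∉ Set.range a := fun hy ↦ hx_far (Or.inr ⟨y, hy, hxy.symm⟩)
  have hy_last : G.Adj (a (Fin.last k)) y := by
    obtain ⟨i, hi⟩ := mem_closedNbhd_range.1 (not_imp_comm.1 (hcomp'.mem_of_adj hx hxy) hyC')
    induction i using Fin.lastCases with
    | last => exact hi.resolve_left fun hy ↦ hy_notMem ⟨_, hy.symm⟩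
    | cast i => exact absurd (mem_closedNbhd_range.2 ⟨i, hi⟩) hy_far
  have hy_adj (i) : G.Adj (a i) y ↔ i = Fin.last k := by
    induction i using Fin.lastCases with
    | last => simp [hy_last]
    | cast i =>
      exact iff_of_false (fun hi ↦ hy_far (mem_closedNbhd_range.2 ⟨i, Or.inr hi⟩))
        (Fin.castSucc_ne_last i)
  refine ⟨⟨hsub, fun hCC' ↦ hzC' (hCC' hzC)⟩, y, h.isInducedPath.snoc hy_notMem hy_adj, ?_, ?_⟩
  · rwa [Fin.snoc_comp_castSucc]
  · rw [Fin.snoc_last]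
    exact Or.inr ⟨x, hx, hxy⟩

theorem exists_adj_last {a : Fin (k + 2) → V} (h : IsGyarfasPath G a C) :
    ∃ x ∈ C, G.Adj x (a (Fin.last (k + 1))) := by
  refine h.last_mem.resolve_left (h.isMajorityComp.isCompOfDel.disjoint.notMem_of_mem_right ?_)
  exact mem_closedNbhd_range.2 ⟨Fin.last k, Or.inr ((h.isInducedPath.2 _ _).2 (Or.inl rfl))⟩

theorem exists_isInducedCycle {a : Fin (k + 3) → V} (h : IsGyarfasPath G a C) {u : V}
    (huC : ∃ x ∈ C, G.Adj x u) (hu0 : G.Adj (a 0) u)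
    (hu : u ∉ closedNbhd G (Set.range ((a ∘ Fin.succ) ∘ Fin.castSucc))) :
    ∃ n, k + 4 ≤ n ∧ ∃ p : Fin n → V, IsInducedCycle G p := by
  have hpath := h.isInducedPath
  have hcomp := h.isMajorityComp.isCompOfDel
  have hlast_adj (i : Fin (k + 2)) :
      G.Adj (a i.castSucc) (a (Fin.last (k + 2))) ↔ i = Fin.last (k + 1) := by
    rw [hpath.2, Fin.ext_iff]
    simp only [Fin.val_castSucc, Fin.val_last]
    omega
  have hu_far (i : Fin (k + 1)) : ¬ (u = a i.succ.castSucc ∨ G.Adj (a i.succ.castSucc) u) :=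
    fun hi ↦ hu (mem_closedNbhd_range.2 ⟨i, hi⟩)
  have hu_ne (i : Fin (k + 2)) : a i.castSucc ≠ u := by
    cases i using Fin.cases with
    | zero => exact hu0.ne
    | succ i => exact fun hi ↦ hu_far i (Or.inl hi.symm)
  have hu_adj (i : Fin (k + 2)) : G.Adj (a i.castSucc) u ↔ i = 0 := by
    cases i using Fin.cases with
    | zero => exact iff_of_true hu0 rfl
    | succ i => exact iff_of_false (fun hi ↦ hu_far i (Or.inr hi)) (Fin.succ_ne_zero i)
  have hlast_ne : a (Fin.last (k + 2)) ≠ u := by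
    rintro rfl
    exact hu_far (Fin.last k) (Or.inr ((hlast_adj _).2 rfl))
  exact hpath.comp_castSucc.exists_isInducedCycle_of_detour hcomp.preconnected hcomp.disjoint
    hlast_ne h.exists_adj_last huC (fun i ↦ hpath.1.ne (Fin.castSucc_ne_last i)) hu_ne hlast_adj
    hu_adj

theorem comp_succ {a : Fin (k + 3) → V} (h : IsGyarfasPath G a C) (hfree : CgeFree G (k + 4)) :
    IsGyarfasPath G (a ∘ Fin.succ) C := by
  have hcomp := h.isMajorityComp.isCompOfDel
  have hsub : Set.range ((a ∘ Fin.succ) ∘ Fin.castSucc) ⊆ Set.range (a ∘ Fin.castSucc) :=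
    Set.range_subset_iff.2 fun i ↦ ⟨i.succ, rfl⟩
  refine ⟨h.isInducedPath.comp_succ, ⟨.of_preconnected hcomp.nonempty
    (hcomp.disjoint.mono_right (closedNbhd_mono hsub)) hcomp.preconnected ?_,
    h.isMajorityComp.card_lt⟩, h.last_mem⟩
  intro x hx u hxu hu
  refine hcomp.mem_of_adj hx hxu fun hu' ↦ ?_
  have hu0 : G.Adj (a 0) u := by
    obtain ⟨i, hi⟩ := mem_closedNbhd_range.1 hu'
    induction i using Fin.cases with
    | zero =>
      refine hi.resolve_left fun hu0 ↦ hcomp.disjoint.notMem_of_mem_left hx ?_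
      exact mem_closedNbhd_range.2 ⟨0, Or.inr (hu0 ▸ hxu.symm)⟩
    | succ i => exact absurd (mem_closedNbhd_range.2 ⟨i, hi⟩) hu
  obtain ⟨n, hn, p, hp⟩ := h.exists_isInducedCycle ⟨x, hx, hxu⟩ hu0 hu
  exact hfree n hn p hp

end IsGyarfasPath

theorem exists_isGyarfasPath [Finite V] (k : ℕ)
    (hmajor : ∀ A : Set V, A.ncard ≤ k → ∃ C, IsMajorityComp G A C) :
    ∃ (a : Fin (k + 1) → V) (C : Set V), IsGyarfasPath G a C := by
  induction k with
  | zero =>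
    obtain ⟨C, hC⟩ := hmajor ∅ (by simp)
    obtain ⟨v, hv⟩ := hC.isCompOfDel.nonempty
    have hv_path : IsInducedPath G (fun _ : Fin 1 ↦ v) :=
      ⟨Function.injective_of_subsingleton _, by simp⟩
    exact ⟨_, C, hv_path, by rwa [Set.range_eq_empty], Or.inl hv⟩
  | succ k ih =>
    obtain ⟨a, C, h⟩ := ih fun A hA ↦ hmajor A (by omega)
    obtain ⟨C', hC'⟩ := hmajor (Set.range a) (ncard_range_fin_le a)
    obtain ⟨-, y, hy⟩ := h.exists_snoc hC'
    exact ⟨_, C', hy⟩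

theorem CgeFree.exists_separator [Finite V] {k : ℕ} (hfree : CgeFree G (k + 4)) :
    ∃ A : Set V, A.ncard ≤ k + 2 ∧
      ∀ C, IsCompOfDel G (closedNbhd G A) C → 2 * C.ncard ≤ Nat.card V := by
  by_contra! hsep
  have hmajor (A : Set V) (hA : A.ncard ≤ k + 2) : ∃ C, IsMajorityComp G A C := by
    obtain ⟨C, hC, hcard⟩ := hsep A hA
    exact ⟨C, hC, hcard⟩
  have hne : {C | ∃ a : Fin (k + 3) → V, IsGyarfasPath G a C}.Nonempty := by
    obtain ⟨a, C, h⟩ := exists_isGyarfasPath (k + 2) hmajor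
    exact ⟨C, a, h⟩
  obtain ⟨C, ⟨a, h⟩, hmin⟩ := wellFounded_lt.has_min _ hne
  have hdrop := h.comp_succ hfree
  obtain ⟨C', hC'⟩ := hmajor (Set.range (a ∘ Fin.succ)) (ncard_range_fin_le _)
  obtain ⟨hlt, y, hy⟩ := hdrop.exists_snoc hC'
  exact hmin C' ⟨_, hy⟩ hlt

end

theorem le_sub_sqrt_of_two_mul_le {n c : ℝ} (hn : 2 ≤ √n) (hc : 2 * c ≤ n) : c ≤ n - √n := by
  have hsq : √n * √n = n := Real.mul_self_sqrt (Real.sqrt_pos.1 (by linarith)).le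
  nlinarith

theorem le_rpow_neg_half_mul_sub {n c x : ℝ} (hn : 0 < n) (hc : 2 * c ≤ n) (hx : 2 * x ≤ √n) :
    x ≤ n ^ (-(1 / 2 : ℝ)) * (n - c) := by
  have hsq : √n * √n = n := Real.mul_self_sqrt hn.le
  rw [Real.rpow_neg hn.le, ← Real.sqrt_eq_rpow, inv_mul_eq_div, le_div_iff₀ (Real.sqrt_pos.2 hn)]
  nlinarith [Real.sqrt_nonneg n]

theorem stmt5_general {V : Type} [Fintype V] (t : ℕ) (ht : 2 ≤ t) (G : SimpleGraph V)
    (hfree : CgeFree G t)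
    (hdeg : ∀ v : V, ((closedNbhd G {v}).ncard : ℝ) ≤
      (1 / (4 * ((t : ℝ) - 1))) * Real.sqrt (Fintype.card V)) :
    ∃ X : Set V, ∀ C : Set V, IsCompOfDel G X C →
      (C.ncard : ℝ) ≤ (Fintype.card V : ℝ) - Real.sqrt (Fintype.card V) ∧
      (X.ncard : ℝ) ≤ (Fintype.card V : ℝ) ^ (-(1 / 2 : ℝ)) *
        ((Fintype.card V : ℝ) - (C.ncard : ℝ)) := by
  -- For `t = 2, 3` the subtraction truncates, and `G` is used as a `C_{≥4}`-free graph.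
  obtain ⟨A, hA, hsep⟩ := CgeFree.exists_separator (k := t - 4) (hfree.mono (by omega))
  refine ⟨closedNbhd G A, fun C hC ↦ ?_⟩
  set n : ℝ := (Fintype.card V : ℝ) with hn
  set B : ℝ := 1 / (4 * ((t : ℝ) - 1)) * √n with hB
  have hCn : 2 * (C.ncard : ℝ) ≤ n := by
    rw [hn, ← Nat.card_eq_fintype_card]
    exact_mod_cast hsep C hC
  have ht' : (2 : ℝ) ≤ t := by exact_mod_cast ht
  have hsqrt : √n = 4 * (t - 1) * B := by
    have : (t : ℝ) - 1 ≠ 0 := by linarith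
    rw [hB]
    field_simp
  have hB1 : 1 ≤ B := by
    obtain ⟨v, -⟩ := hC.nonempty
    have hpos : 0 < (closedNbhd G {v}).ncard := (Set.ncard_pos).2 ⟨v, Or.inl rfl⟩
    exact (Nat.one_le_cast.2 hpos).trans (hdeg v)
  have hX : 2 * ((closedNbhd G A).ncard : ℝ) ≤ √n := by
    have hAt : (A.ncard + 2 : ℝ) ≤ 2 * t := by exact_mod_cast (by omega : A.ncard + 2 ≤ 2 * t)
    calc
      2 * ((closedNbhd G A).ncard : ℝ) ≤ 2 * (A.ncard * B) := by
        gcongr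
        exact ncard_closedNbhd_le fun v _ ↦ hdeg v
      _ ≤ 2 * (2 * (t - 1) * B) := by
        gcongr
        linarith
      _ = √n := by rw [hsqrt]; ring
  have hsqrt4 : 4 ≤ √n := by nlinarith
  exact ⟨le_sub_sqrt_of_two_mul_le (by linarith) hCn,
    le_rpow_neg_half_mul_sub (Real.sqrt_pos.1 (by linarith)) hCn hX⟩

/-- if `G` is a connected `C_{≥t}`-free graph on `n ≥ 16` vertices with
`|N[v]| ≤ (1/(4(t-1)))·√n` for every vertex `v`, then there is a set `X` of vertices
such that every connected component `C` of `G - X` satisfies `|C| ≤ n - √n` and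
`|X| ≤ n^{-1/2}·(n - |C|)`. -/
theorem stmt5 {V : Type} [Fintype V] (t : ℕ) (ht : 4 ≤ t) (G : SimpleGraph V)
    (hconn : G.Connected) (hfree : CgeFree G t) (hn : 16 ≤ Fintype.card V)
    (hdeg : ∀ v : V, ((closedNbhd G {v}).ncard : ℝ) ≤
      (1 / (4 * ((t : ℝ) - 1))) * Real.sqrt (Fintype.card V)) :
    ∃ X : Set V, ∀ C : Set V, IsCompOfDel G X C →
      (C.ncard : ℝ) ≤ (Fintype.card V : ℝ) - Real.sqrt (Fintype.card V) ∧
      (X.ncard : ℝ) ≤ (Fintype.card V : ℝ) ^ (-(1 / 2 : ℝ)) *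
        ((Fintype.card V : ℝ) - (C.ncard : ℝ)) :=
  stmt5_general t (by omega) G hfree hdeg

end Paper
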